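/- Let ψ : ℝ → ℝ be the Legendre–Fenchel conjugate of the exponential Young function φ(x) = cosh(x) − 1, i.e. ψ(u) = sup_{x ∈ ℝ} (u·x − cosh(x) + 1), which is finite for every u. Then ψ satisfies the Δ₂ condition: there exists a constant K > 0 such that ψ(2u) ≤ K·ψ(u) for all u ∈ ℝ. -/

import Mathlib

/-- The Legendre–Fenchel conjugate `ψ(u) = sup_x (u·x − (cosh x − 1))` of the
exponential Young function `φ(x) = cosh x − 1`; it is finite for every real `u`. -/
noncomputable def coshConj (u : ℝ) : ℝ :=
  ⨆ x : ℝ, (u * x - (Real.cosh x - 1))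

theorem one_add_sq_div_two_le_cosh (x : ℝ) : 1 + x ^ 2 / 2 ≤ Real.cosh x := by
  have hcosh : Real.cosh x = 1 + 2 * Real.sinh (x / 2) ^ 2 := by
    have h := Real.cosh_two_mul (x / 2)
    rw [mul_div_cancel₀ x (two_ne_zero), Real.cosh_sq] at h
    linarith
  have hsinh : (x / 2) ^ 2 ≤ Real.sinh (x / 2) ^ 2 := by
    rw [sq_le_sq, Real.abs_sinh]
    exact Real.self_le_sinh_iff.2 (abs_nonneg _)
  linarith

theorem bddAbove_range_coshConj (u : ℝ) :
    BddAbove (Set.range fun x : ℝ => u * x - (Real.cosh x - 1)) := by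
  refine ⟨u ^ 2 / 2, ?_⟩
  rintro _ ⟨x, rfl⟩
  linarith [one_add_sq_div_two_le_cosh x, sq_nonneg (u - x), sub_sq u x]

theorem four_mul_cosh_half_sub_one_le (x : ℝ) :
    4 * (Real.cosh (x / 2) - 1) ≤ Real.cosh x - 1 := by
  have h := Real.cosh_two_mul (x / 2)
  rw [mul_div_cancel₀ x (two_ne_zero), Real.sinh_sq] at h
  linarith [sq_nonneg (Real.cosh (x / 2) - 1), sub_sq (Real.cosh (x / 2)) 1]

/-- The conjugate `ψ` of the exponential Young function `φ(x) = cosh x − 1`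
satisfies the `Δ₂` condition: `ψ(2u) ≤ K·ψ(u)` for some `K > 0` and all `u`. -/
theorem coshConj_delta_two :
    ∃ K > (0 : ℝ), ∀ u : ℝ, coshConj (2 * u) ≤ K * coshConj u := by
  refine ⟨4, by norm_num, fun u => ciSup_le fun x => ?_⟩
  have h : u * (x / 2) - (Real.cosh (x / 2) - 1) ≤ coshConj u :=
    le_ciSup (bddAbove_range_coshConj u) (x / 2)
  linarith [four_mul_cosh_half_sub_one_le x]
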